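/- Let H : Ω → S(m) be continuously differentiable with repeated eigenvalues λ_i(x) and eigenprojections P_i(x), and let x : [a,b] → Ω be a C¹ curve. Fix j ∈ {1,…,m} and assume that the rank tr P_j(x(t)) = d_j is constant along the curve. Then the function t ↦ λ_j(x(t)) is differentiable on (a,b) with derivative (d/dt) λ_j(x(t)) = (1/d_j) · tr( P_j(x(t)) · D_{x'(t)} H(x(t)) ). -/

import Mathlib

open scoped Classical

/-- Entrywise directional derivative `D_e H(x)` of a matrix-valued map. -/
noncomputable def DH {E : Type*} [NormedAddCommGroup E] [NormedSpace ℝ E] {m : ℕ}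
    (H : E → Matrix (Fin m) (Fin m) ℝ) (x e : E) : Matrix (Fin m) (Fin m) ℝ :=
  Matrix.of fun i k => fderiv ℝ (fun y => H y i k) x e

/-- Second-order directional derivative `D_b D_a H(x)` (first `a`, then `b`). -/
noncomputable def DH2 {E : Type*} [NormedAddCommGroup E] [NormedSpace ℝ E] {m : ℕ}
    (H : E → Matrix (Fin m) (Fin m) ℝ) (x a b : E) : Matrix (Fin m) (Fin m) ℝ :=
  Matrix.of fun i k => fderiv ℝ (fun y => DH H y a i k) x b

/-- The pseudoinverse `A_j(x)` of `λ_j(x)I - H(x)`. -/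
noncomputable def Amat {E : Type*} {m : ℕ} (lam : Fin m → E → ℝ)
    (P : Fin m → E → Matrix (Fin m) (Fin m) ℝ) (j : Fin m) (x : E) :
    Matrix (Fin m) (Fin m) ℝ :=
  ∑ i ∈ Finset.univ.filter (fun i => lam i x ≠ lam j x),
    (((Finset.univ.filter fun k => lam k x = lam i x).card : ℝ) * (lam j x - lam i x))⁻¹ • P i x

/-!
Let `A`, `B` be symmetric with eigenvalues `l`, `μ` and eigenprojections `P`, `Q`. The identity
`tr (P i * (B - A) * Q k) = (μ k - l i) * tr (P i * Q k)`, applied with `i = k = j` to two points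
of the curve and divided by the time increment, expresses the difference quotient of the
eigenvalue, so the derivative exists as soon as `P j` is continuous along the curve.

For this continuity, the normalised overlaps `tr (P i * Q k)` form a doubly stochastic matrix `W`
with `∑ i, ∑ k, W i k * (l i - μ k) ^ 2 = ‖A - B‖ ^ 2` in the Frobenius norm. By Birkhoff's theorem
and the rearrangement inequality the left-hand side is at least `∑ i, (l i - μ i) ^ 2`, hence the
ordered eigenvalues are continuous; and then the overlap of `Q j` with the eigenspace of any
`l i ≠ l j` tends to `0` as `B → A`. At constant rank this forces `Q j → P j`.
-/

open Filter Topology Finset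
open scoped Matrix Matrix.Norms.Frobenius

section DoublyStochastic

variable {ι : Type*} [Fintype ι] {x y : ι → ℝ}

lemma sum_sub_sq_le_sum_sub_comp_perm_sq (hxy : Monovary x y) (σ : Equiv.Perm ι) :
    ∑ i, (x i - y i) ^ 2 ≤ ∑ i, (x i - y (σ i)) ^ 2 := by
  have hsq : ∑ i, y (σ i) ^ 2 = ∑ i, y i ^ 2 := Equiv.sum_comp σ fun i => y i ^ 2
  have hrearr : ∑ i, x i * y (σ i) ≤ ∑ i, x i * y i := hxy.sum_mul_comp_perm_le_sum_mul
  simp only [sub_sq, sum_add_distrib, sum_sub_distrib, mul_assoc, ← mul_sum, hsq]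
  linarith

lemma sum_sub_sq_le_of_mem_doublyStochastic [DecidableEq ι] {W : Matrix ι ι ℝ}
    (hW : W ∈ doublyStochastic ℝ ι) (hxy : Monovary x y) :
    ∑ i, (x i - y i) ^ 2 ≤ ∑ i, ∑ k, W i k * (x i - y k) ^ 2 := by
  set cost : Matrix ι ι ℝ → ℝ := fun W => ∑ i, ∑ k, W i k * (x i - y k) ^ 2
  have hcost : IsLinearMap ℝ cost :=
    { map_add := fun V W => by
        simp only [cost, Matrix.add_apply, add_mul, sum_add_distrib]
      map_smul := fun r W => by
        simp only [cost, Matrix.smul_apply, smul_eq_mul, mul_assoc, mul_sum] }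
  rw [← SetLike.mem_coe, doublyStochastic_eq_convexHull_permMatrix] at hW
  refine convexHull_min ?_ (convex_halfSpace_ge hcost _) hW
  rintro _ ⟨σ, rfl⟩
  have hperm : cost (σ.permMatrix ℝ) = ∑ i, (x i - y (σ i)) ^ 2 := by
    simp [cost, Equiv.Perm.permMatrix, PEquiv.toMatrix_apply]
  exact (sum_sub_sq_le_sum_sub_comp_perm_sq hxy σ).trans_eq hperm.symm

end DoublyStochastic

section FrobeniusNorm

variable {m n : Type*} [Fintype m] [Fintype n]

lemma frobenius_norm_sq_eq_trace (A : Matrix m n ℝ) : ‖A‖ ^ 2 = (Aᴴ * A).trace := by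
  have hsum : ‖A‖ ^ 2 = ∑ i, ∑ j, A i j ^ 2 := by
    rw [Matrix.frobenius_norm_def, ← Real.sqrt_eq_rpow, Real.sq_sqrt (by positivity)]
    simp
  rw [hsum, sum_comm]
  simp [Matrix.trace, Matrix.mul_apply, sq]

lemma frobenius_norm_sub_sq {A B : Matrix n n ℝ} (hA : IsSelfAdjoint A) (hB : IsSelfAdjoint B) :
    ‖A - B‖ ^ 2 = (A * A).trace - 2 * (A * B).trace + (B * B).trace := by
  rw [frobenius_norm_sq_eq_trace, ← Matrix.star_eq_conjTranspose, (hA.sub hB).star_eq]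
  simp only [sub_mul, mul_sub, Matrix.trace_sub, Matrix.trace_mul_comm B A]
  ring

lemma trace_mul_nonneg_of_isStarProjection {P Q : Matrix n n ℝ} (hP : IsStarProjection P)
    (hQ : IsStarProjection Q) : 0 ≤ (P * Q).trace := by
  calc 0 ≤ ‖P * Q‖ ^ 2 := sq_nonneg _
    _ = (Q * P * (P * Q)).trace := by
      rw [frobenius_norm_sq_eq_trace, ← Matrix.star_eq_conjTranspose, star_mul,
        hP.isSelfAdjoint.star_eq, hQ.isSelfAdjoint.star_eq]
    _ = (P * P * (Q * Q)).trace := by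
      rw [mul_assoc, Matrix.trace_mul_comm]
      simp only [mul_assoc]
    _ = (P * Q).trace := by rw [hP.isIdempotentElem.eq, hQ.isIdempotentElem.eq]

end FrobeniusNorm

section SpectralResolution

variable {n ι : Type*} [Fintype n] [Fintype ι]

/-- The number of times the value `l i` is repeated in the family `l`. -/
noncomputable def multiplicityIn (l : ι → ℝ) (i : ι) : ℕ := #{k | l k = l i}

lemma multiplicityIn_ne_zero (l : ι → ℝ) (i : ι) : (multiplicityIn l i : ℝ) ≠ 0 :=
  Nat.cast_ne_zero.2 (card_ne_zero_of_mem (mem_filter.2 ⟨mem_univ i, rfl⟩))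

lemma multiplicityIn_congr {l : ι → ℝ} {i k : ι} (h : l i = l k) :
    multiplicityIn l i = multiplicityIn l k := by
  simp only [multiplicityIn, h]

/-- The eigenprojection `P i` divided by the multiplicity of `l i`, so that an eigenprojection
listed once for each repetition of its eigenvalue is counted once in a sum over all indices. -/
noncomputable def unitTraceProj (l : ι → ℝ) (P : ι → Matrix n n ℝ) (i : ι) : Matrix n n ℝ :=
  (multiplicityIn l i : ℝ)⁻¹ • P i

/-- `l` lists the eigenvalues of the symmetric matrix `A` with multiplicity, and `P i` is the
orthogonal projection onto the whole eigenspace of `l i`, so that `P` repeats along with `l`. The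
order of the list is left free. -/
structure IsSpectralResolution [DecidableEq n] (A : Matrix n n ℝ) (l : ι → ℝ)
    (P : ι → Matrix n n ℝ) : Prop where
  isStarProjection : ∀ i, IsStarProjection (P i)
  mul_proj : ∀ i, A * P i = l i • P i
  trace_proj : ∀ i, (P i).trace = multiplicityIn l i
  proj_congr : ∀ i k, l i = l k → P i = P k
  sum_unitTraceProj : ∑ i, unitTraceProj l P i = 1

/-- The matrix of the overlaps `tr (P i * P' k)` between the eigenspaces of two spectral
resolutions, normalised so as to be doubly stochastic. -/
noncomputable def spectralOverlap (l : ι → ℝ) (P : ι → Matrix n n ℝ) (l' : ι → ℝ)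
    (P' : ι → Matrix n n ℝ) : Matrix ι ι ℝ :=
  Matrix.of fun i k => (unitTraceProj l P i * unitTraceProj l' P' k).trace

lemma spectralOverlap_apply (l : ι → ℝ) (P : ι → Matrix n n ℝ) (l' : ι → ℝ)
    (P' : ι → Matrix n n ℝ) (i k : ι) : spectralOverlap l P l' P' i k =
      (multiplicityIn l i : ℝ)⁻¹ * (multiplicityIn l' k : ℝ)⁻¹ * (P i * P' k).trace := by
  simp only [spectralOverlap, unitTraceProj, Matrix.of_apply, smul_mul_smul_comm,
    Matrix.trace_smul, smul_eq_mul]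

namespace IsSpectralResolution

variable [DecidableEq n] {A B : Matrix n n ℝ} {l l' : ι → ℝ} {P P' : ι → Matrix n n ℝ}

lemma trace_unitTraceProj (h : IsSpectralResolution A l P) (i : ι) :
    (unitTraceProj l P i).trace = 1 := by
  rw [unitTraceProj, Matrix.trace_smul, h.trace_proj, smul_eq_mul,
    inv_mul_cancel₀ (multiplicityIn_ne_zero l i)]

lemma mul_unitTraceProj (h : IsSpectralResolution A l P) (i : ι) :
    A * unitTraceProj l P i = l i • unitTraceProj l P i := by
  rw [unitTraceProj, mul_smul_comm, h.mul_proj, smul_comm]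

lemma eq_sum_smul (h : IsSpectralResolution A l P) : A = ∑ i, l i • unitTraceProj l P i := by
  simp only [← h.mul_unitTraceProj, ← mul_sum, h.sum_unitTraceProj, mul_one]

lemma isSelfAdjoint (h : IsSpectralResolution A l P) : IsSelfAdjoint A := by
  rw [h.eq_sum_smul]
  exact isSelfAdjoint_sum _ fun i _ => (IsSelfAdjoint.all _).smul
    ((IsSelfAdjoint.all _).smul (h.isStarProjection i).isSelfAdjoint)

lemma proj_mul (h : IsSpectralResolution A l P) (i : ι) : P i * A = l i • P i := by
  simpa [h.isSelfAdjoint.star_eq, (h.isStarProjection i).isSelfAdjoint.star_eq]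
    using congrArg star (h.mul_proj i)

lemma trace_mul_self (h : IsSpectralResolution A l P) : (A * A).trace = ∑ i, l i ^ 2 := by
  have hsq : A * A = ∑ i, l i ^ 2 • unitTraceProj l P i := by
    nth_rw 2 [h.eq_sum_smul]
    simp only [mul_sum, mul_smul_comm, h.mul_unitTraceProj, smul_smul, sq]
  simp only [hsq, Matrix.trace_sum, Matrix.trace_smul, h.trace_unitTraceProj, smul_eq_mul, mul_one]

lemma trace_mul (h : IsSpectralResolution A l P) (h' : IsSpectralResolution B l' P') :
    (A * B).trace = ∑ i, ∑ k, spectralOverlap l P l' P' i k * (l i * l' k) := by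
  conv_lhs => rw [h.eq_sum_smul, h'.eq_sum_smul]
  simp only [sum_mul_sum, Matrix.trace_sum, smul_mul_smul_comm, Matrix.trace_smul, spectralOverlap,
    Matrix.of_apply, smul_eq_mul, mul_comm]

lemma spectralOverlap_mem_doublyStochastic [DecidableEq ι] (h : IsSpectralResolution A l P)
    (h' : IsSpectralResolution B l' P') :
    spectralOverlap l P l' P' ∈ doublyStochastic ℝ ι := by
  refine mem_doublyStochastic_iff_sum.2 ⟨fun i k => ?_, fun i => ?_, fun k => ?_⟩
  · have := trace_mul_nonneg_of_isStarProjection (h.isStarProjection i) (h'.isStarProjection k)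
    rw [spectralOverlap_apply]
    positivity
  · simp only [spectralOverlap, Matrix.of_apply, ← Matrix.trace_sum, ← mul_sum,
      h'.sum_unitTraceProj, mul_one, h.trace_unitTraceProj]
  · simp only [spectralOverlap, Matrix.of_apply, ← Matrix.trace_sum, ← sum_mul,
      h.sum_unitTraceProj, one_mul, h'.trace_unitTraceProj]

lemma sum_spectralOverlap_mul_sub_sq (h : IsSpectralResolution A l P)
    (h' : IsSpectralResolution B l' P') :
    ∑ i, ∑ k, spectralOverlap l P l' P' i k * (l i - l' k) ^ 2 = ‖A - B‖ ^ 2 := by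
  set W := spectralOverlap l P l' P'
  have hW : W ∈ doublyStochastic ℝ ι := h.spectralOverlap_mem_doublyStochastic h'
  have hrow : ∑ i, ∑ k, W i k * l i ^ 2 = ∑ i, l i ^ 2 := by
    simp only [← sum_mul, sum_row_of_mem_doublyStochastic hW, one_mul]
  have hcol : ∑ i, ∑ k, W i k * l' k ^ 2 = ∑ k, l' k ^ 2 := by
    rw [sum_comm]
    simp only [← sum_mul, sum_col_of_mem_doublyStochastic hW, one_mul]
  rw [frobenius_norm_sub_sq h.isSelfAdjoint h'.isSelfAdjoint, h.trace_mul_self, h'.trace_mul_self,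
    h.trace_mul h', ← hrow, ← hcol]
  simp only [mul_sum, ← sum_sub_distrib, ← sum_add_distrib]
  exact sum_congr rfl fun i _ => sum_congr rfl fun k _ => by ring

/-- The Hoffman–Wielandt inequality. -/
lemma sum_sub_sq_le_norm_sub_sq (h : IsSpectralResolution A l P)
    (h' : IsSpectralResolution B l' P') (hl : Monovary l l') :
    ∑ i, (l i - l' i) ^ 2 ≤ ‖A - B‖ ^ 2 :=
  (sum_sub_sq_le_of_mem_doublyStochastic (h.spectralOverlap_mem_doublyStochastic h') hl).trans_eq
    (h.sum_spectralOverlap_mul_sub_sq h')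

lemma abs_sub_le_norm_sub (h : IsSpectralResolution A l P) (h' : IsSpectralResolution B l' P')
    (hl : Monovary l l') (j : ι) : |l j - l' j| ≤ ‖A - B‖ := by
  refine abs_le_of_sq_le_sq ?_ (norm_nonneg _)
  exact (single_le_sum (f := fun i => (l i - l' i) ^ 2) (fun i _ => sq_nonneg _)
    (mem_univ j)).trans (h.sum_sub_sq_le_norm_sub_sq h' hl)

lemma spectralOverlap_mul_sub_sq_le (h : IsSpectralResolution A l P)
    (h' : IsSpectralResolution B l' P') (i k : ι) :
    spectralOverlap l P l' P' i k * (l i - l' k) ^ 2 ≤ ‖A - B‖ ^ 2 := by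
  have hnonneg (i k : ι) : 0 ≤ spectralOverlap l P l' P' i k * (l i - l' k) ^ 2 :=
    mul_nonneg (nonneg_of_mem_doublyStochastic (h.spectralOverlap_mem_doublyStochastic h'))
      (sq_nonneg _)
  rw [← h.sum_spectralOverlap_mul_sub_sq h']
  exact (single_le_sum (fun k _ => hnonneg i k) (mem_univ k)).trans
    (single_le_sum (fun i _ => sum_nonneg fun k _ => hnonneg i k) (mem_univ i))

lemma trace_proj_mul_proj (h : IsSpectralResolution A l P) (h' : IsSpectralResolution B l' P')
    (j : ι) : (P j * P' j).trace =
      multiplicityIn l' j * (1 - ∑ i with l i ≠ l j, spectralOverlap l P l' P' i j) := by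
  have hsplit := sum_col_of_mem_doublyStochastic (h.spectralOverlap_mem_doublyStochastic h') j
  have hsame : ∑ i with l i = l j, spectralOverlap l P l' P' i j =
      (multiplicityIn l' j : ℝ)⁻¹ * (P j * P' j).trace := by
    calc _ = ∑ i with l i = l j, (multiplicityIn l j : ℝ)⁻¹ *
          ((multiplicityIn l' j : ℝ)⁻¹ * (P j * P' j).trace) := by
          refine sum_congr rfl fun i hi => ?_
          have hi : l i = l j := (mem_filter.1 hi).2
          rw [spectralOverlap_apply, multiplicityIn_congr hi, h.proj_congr i j hi, mul_assoc]
      _ = _ := by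
          rw [sum_const, nsmul_eq_mul, ← multiplicityIn,
            mul_inv_cancel_left₀ (multiplicityIn_ne_zero l j)]
  rw [← sum_filter_add_sum_filter_not univ (fun i => l i = l j), hsame] at hsplit
  rw [← eq_sub_of_add_eq hsplit, mul_inv_cancel_left₀ (multiplicityIn_ne_zero l' j)]

lemma trace_proj_mul_sub_mul_proj (h : IsSpectralResolution A l P)
    (h' : IsSpectralResolution B l' P') (i k : ι) :
    (P i * (B - A) * P' k).trace = (l' k - l i) * (P i * P' k).trace := by
  rw [mul_sub, sub_mul, h.proj_mul, mul_assoc, h'.mul_proj, mul_smul_comm, smul_mul_assoc,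
    ← sub_smul, Matrix.trace_smul, smul_eq_mul]

section Limits

variable {α : Type*} {F : Filter α} {A₀ : Matrix n n ℝ} {l₀ : ι → ℝ} {P₀ : ι → Matrix n n ℝ}
  {A : α → Matrix n n ℝ} {l : α → ι → ℝ} {P : α → ι → Matrix n n ℝ}

lemma tendsto_eigenvalue (h₀ : IsSpectralResolution A₀ l₀ P₀)
    (h : ∀ᶠ s in F, IsSpectralResolution (A s) (l s) (P s))
    (hl : ∀ᶠ s in F, Monovary (l s) l₀) (hA : Tendsto A F (𝓝 A₀)) (j : ι) :
    Tendsto (fun s => l s j) F (𝓝 (l₀ j)) := by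
  refine tendsto_iff_norm_sub_tendsto_zero.2 ?_
  refine squeeze_zero' (.of_forall fun s => norm_nonneg _) ?_
    (tendsto_iff_norm_sub_tendsto_zero.1 hA)
  filter_upwards [h, hl] with s hs hls using hs.abs_sub_le_norm_sub h₀ hls j

lemma tendsto_spectralOverlap (h₀ : IsSpectralResolution A₀ l₀ P₀)
    (h : ∀ᶠ s in F, IsSpectralResolution (A s) (l s) (P s))
    (hl : ∀ᶠ s in F, Monovary (l s) l₀) (hA : Tendsto A F (𝓝 A₀)) {i j : ι} (hij : l₀ i ≠ l₀ j) :
    Tendsto (fun s => spectralOverlap l₀ P₀ (l s) (P s) i j) F (𝓝 0) := by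
  have hgap : Tendsto (fun s => (l₀ i - l s j) ^ 2) F (𝓝 ((l₀ i - l₀ j) ^ 2)) :=
    ((tendsto_eigenvalue h₀ h hl hA j).const_sub _).pow 2
  have hgap_pos : 0 < (l₀ i - l₀ j) ^ 2 := sq_pos_of_ne_zero (sub_ne_zero.2 hij)
  have hbound : Tendsto (fun s => ‖A₀ - A s‖ ^ 2 / (l₀ i - l s j) ^ 2) F (𝓝 0) := by
    have hnorm : Tendsto (fun s => ‖A₀ - A s‖ ^ 2) F (𝓝 (‖A₀ - A₀‖ ^ 2)) :=
      (hA.const_sub A₀).norm.pow 2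
    simpa [Pi.div_def] using hnorm.div hgap hgap_pos.ne'
  refine squeeze_zero' ?_ ?_ hbound
  · filter_upwards [h] with s hs
    exact nonneg_of_mem_doublyStochastic (h₀.spectralOverlap_mem_doublyStochastic hs)
  · filter_upwards [h, hgap.eventually_const_lt hgap_pos] with s hs hpos
    rw [le_div_iff₀ hpos]
    exact h₀.spectralOverlap_mul_sub_sq_le hs i j

lemma tendsto_trace_proj_mul_proj (h₀ : IsSpectralResolution A₀ l₀ P₀)
    (h : ∀ᶠ s in F, IsSpectralResolution (A s) (l s) (P s))
    (hl : ∀ᶠ s in F, Monovary (l s) l₀) (hA : Tendsto A F (𝓝 A₀)) {j : ι}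
    (hrank : ∀ᶠ s in F, (P s j).trace = (P₀ j).trace) :
    Tendsto (fun s => (P₀ j * P s j).trace) F (𝓝 (P₀ j).trace) := by
  have hsum : Tendsto (fun s => (P₀ j).trace *
      (1 - ∑ i with l₀ i ≠ l₀ j, spectralOverlap l₀ P₀ (l s) (P s) i j)) F
      (𝓝 ((P₀ j).trace * (1 - ∑ i with l₀ i ≠ l₀ j, 0))) :=
    ((tendsto_finsetSum _ fun i hi =>
      tendsto_spectralOverlap h₀ h hl hA (mem_filter.1 hi).2).const_sub 1).const_mul _
  rw [sum_const_zero, sub_zero, mul_one] at hsum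
  refine hsum.congr' ?_
  filter_upwards [h, hrank] with s hs hsrank
  rw [h₀.trace_proj_mul_proj hs, ← hsrank, hs.trace_proj]

lemma tendsto_proj (h₀ : IsSpectralResolution A₀ l₀ P₀)
    (h : ∀ᶠ s in F, IsSpectralResolution (A s) (l s) (P s))
    (hl : ∀ᶠ s in F, Monovary (l s) l₀) (hA : Tendsto A F (𝓝 A₀)) {j : ι}
    (hrank : ∀ᶠ s in F, (P s j).trace = (P₀ j).trace) :
    Tendsto (fun s => P s j) F (𝓝 (P₀ j)) := by
  refine tendsto_iff_norm_sub_tendsto_zero.2 ?_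
  have hsq : Tendsto (fun s => ‖P s j - P₀ j‖ ^ 2) F (𝓝 0) := by
    have hlim := ((tendsto_trace_proj_mul_proj h₀ h hl hA hrank).const_sub (P₀ j).trace).const_mul 2
    rw [sub_self, mul_zero] at hlim
    refine hlim.congr' ?_
    filter_upwards [h, hrank] with s hs hsrank
    rw [frobenius_norm_sub_sq (hs.isStarProjection j).isSelfAdjoint
      (h₀.isStarProjection j).isSelfAdjoint, (hs.isStarProjection j).isIdempotentElem.eq,
      (h₀.isStarProjection j).isIdempotentElem.eq, hsrank, Matrix.trace_mul_comm]
    ring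
  simpa using hsq.sqrt

end Limits

lemma hasDerivWithinAt_eigenvalue {A : ℝ → Matrix n n ℝ} {A' : Matrix n n ℝ} {l : ℝ → ι → ℝ}
    {P : ℝ → ι → Matrix n n ℝ} {S : Set ℝ} {t : ℝ} {j : ι}
    (h : ∀ s ∈ S, IsSpectralResolution (A s) (l s) (P s))
    (hl : ∀ s ∈ S, Monovary (l s) (l t)) (ht : t ∈ S) (hA : HasDerivWithinAt A A' S t)
    (hrank : ∀ s ∈ S, (P s j).trace = (P t j).trace) :
    HasDerivWithinAt (fun s => l s j) ((P t j).trace⁻¹ * (P t j * A').trace) S t := by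
  have hS : S ∈ 𝓝[S \ {t}] t := nhdsWithin_mono t Set.sdiff_subset self_mem_nhdsWithin
  have hAt : Tendsto A (𝓝[S \ {t}] t) (𝓝 (A t)) :=
    hA.continuousWithinAt.mono Set.sdiff_subset
  have hrank_ne : (P t j).trace ≠ 0 := (h t ht).trace_proj j ▸ multiplicityIn_ne_zero (l t) j
  have hproj := tendsto_proj (h t ht) (eventually_of_mem hS h) (eventually_of_mem hS hl) hAt
    (eventually_of_mem hS hrank)
  have htrace := tendsto_trace_proj_mul_proj (h t ht) (eventually_of_mem hS h)
    (eventually_of_mem hS hl) hAt (eventually_of_mem hS hrank)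
  have hnum : Tendsto (fun s => (P t j * slope A t s * P s j).trace) (𝓝[S \ {t}] t)
      (𝓝 (P t j * A').trace) := by
    have hmul := ((hasDerivWithinAt_iff_tendsto_slope.1 hA).const_mul (P t j)).mul hproj
    have hlim : (P t j * A').trace = (P t j * A' * P t j).trace := by
      rw [Matrix.trace_mul_comm _ (P t j), ← mul_assoc,
        ((h t ht).isStarProjection j).isIdempotentElem.eq]
    rw [hlim]
    exact (continuous_id.matrix_trace.tendsto _).comp hmul
  have hslope (s : ℝ) (hs : s ∈ S) : (P t j * slope A t s * P s j).trace =
      slope (fun s => l s j) t s * (P t j * P s j).trace := by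
    rw [slope_def_module, mul_smul_comm, smul_mul_assoc, Matrix.trace_smul,
      (h t ht).trace_proj_mul_sub_mul_proj (h s hs), slope_def_field, smul_eq_mul]
    ring
  rw [hasDerivWithinAt_iff_tendsto_slope, ← div_eq_inv_mul]
  refine (hnum.div htrace hrank_ne).congr' ?_
  filter_upwards [hS, htrace.eventually_ne hrank_ne] with s hs hne
  rw [Pi.div_apply, div_eq_iff hne, hslope s hs]

end IsSpectralResolution

end SpectralResolution

lemma hasDerivWithinAt_comp_of_differentiableAt_entries {E : Type*} [NormedAddCommGroup E]
    [NormedSpace ℝ E] {m : ℕ} {H : E → Matrix (Fin m) (Fin m) ℝ} {c : ℝ → E} {c' : E}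
    {S : Set ℝ} {t : ℝ}
    (hH : ∀ i k, DifferentiableAt ℝ (fun y => H y i k) (c t))
    (hc : HasDerivWithinAt c c' S t) :
    HasDerivWithinAt (fun s => H (c s)) (DH H (c t) c') S t :=
  hasDerivWithinAt_pi.2 fun i => hasDerivWithinAt_pi.2 fun k =>
    (hH i k).hasFDerivAt.comp_hasDerivWithinAt t hc

theorem eigenvalue_differentiable_along_curve_general {E : Type*} [NormedAddCommGroup E]
    [NormedSpace ℝ E] {m : ℕ} {H : E → Matrix (Fin m) (Fin m) ℝ} {lam : Fin m → E → ℝ}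
    {P : Fin m → E → Matrix (Fin m) (Fin m) ℝ} {c : ℝ → E} {c' : E} {S : Set ℝ} {t d : ℝ}
    (hspec : ∀ s ∈ S,
      IsSpectralResolution (H (c s)) (fun i => lam i (c s)) (fun i => P i (c s)))
    (hmono : ∀ s ∈ S, Monotone fun i => lam i (c s))
    (hH : ∀ i k, DifferentiableAt ℝ (fun y => H y i k) (c t))
    (hc : HasDerivWithinAt c c' S t) (ht : t ∈ S) (j : Fin m)
    (hd : ∀ s ∈ S, (P j (c s)).trace = d) :
    HasDerivWithinAt (fun s => lam j (c s)) (d⁻¹ * (P j (c t) * DH H (c t) c').trace) S t := by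
  obtain rfl := hd t ht
  exact IsSpectralResolution.hasDerivWithinAt_eigenvalue hspec
    (fun s hs => (hmono s hs).monovary (hmono t ht)) ht
    (hasDerivWithinAt_comp_of_differentiableAt_entries hH hc) hd

theorem eigenvalue_differentiable_along_curve {n m : ℕ}
    (Ω : Set (EuclideanSpace ℝ (Fin n))) (hΩo : IsOpen Ω) (hΩc : IsConnected Ω)
    (H : EuclideanSpace ℝ (Fin n) → Matrix (Fin m) (Fin m) ℝ)
    (lam : Fin m → EuclideanSpace ℝ (Fin n) → ℝ)
    (P : Fin m → EuclideanSpace ℝ (Fin n) → Matrix (Fin m) (Fin m) ℝ)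
    (hsymm : ∀ x ∈ Ω, (H x).IsSymm)
    (hmono : ∀ x ∈ Ω, Monotone fun i => lam i x)
    (hPsymm : ∀ (j : Fin m) (x), x ∈ Ω → (P j x).IsSymm)
    (hPidem : ∀ (j : Fin m) (x), x ∈ Ω → P j x * P j x = P j x)
    (hHP : ∀ (j : Fin m) (x), x ∈ Ω → H x * P j x = lam j x • P j x)
    (htr : ∀ (j : Fin m) (x), x ∈ Ω →
      (P j x).trace = ((Finset.univ.filter fun i => lam i x = lam j x).card : ℝ))
    (hPeq : ∀ (i j : Fin m) (x), x ∈ Ω → lam i x = lam j x → P i x = P j x)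
    (hPorth : ∀ (i j : Fin m) (x), x ∈ Ω → lam i x ≠ lam j x → P i x * P j x = 0)
    (hcompl : ∀ x ∈ Ω,
      ∑ i, ((Finset.univ.filter fun k => lam k x = lam i x).card : ℝ)⁻¹ • P i x = 1)
    (hH : ∀ i k, ContDiffOn ℝ 1 (fun y => H y i k) Ω)
    (j : Fin m) (a b : ℝ) (hab : a < b)
    (c : ℝ → EuclideanSpace ℝ (Fin n)) (c' : ℝ → EuclideanSpace ℝ (Fin n))
    (hc : ContDiffOn ℝ 1 c (Set.Icc a b))
    (hc' : ∀ t ∈ Set.Icc a b, HasDerivWithinAt c (c' t) (Set.Icc a b) t)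
    (hmem : ∀ t ∈ Set.Icc a b, c t ∈ Ω)
    (d : ℕ) (hd : ∀ t ∈ Set.Icc a b, (P j (c t)).trace = (d : ℝ)) :
    ∀ t ∈ Set.Ioo a b,
      HasDerivAt (fun s => lam j (c s))
        ((d : ℝ)⁻¹ * (P j (c t) * DH H (c t) (c' t)).trace) t := by
  intro t ht
  have htI : t ∈ Set.Icc a b := Set.Ioo_subset_Icc_self ht
  refine HasDerivWithinAt.hasDerivAt (s := Set.Icc a b) ?_ (Icc_mem_nhds ht.1 ht.2)
  exact eigenvalue_differentiable_along_curve_general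
    (fun s hs => ⟨fun i => ⟨hPidem i _ (hmem s hs), hPsymm i _ (hmem s hs)⟩,
      fun i => hHP i _ (hmem s hs), fun i => htr i _ (hmem s hs),
      fun i k => hPeq i k _ (hmem s hs), hcompl _ (hmem s hs)⟩)
    (fun s hs => hmono _ (hmem s hs))
    (fun i k => ((hH i k).contDiffAt (hΩo.mem_nhds (hmem t htI))).differentiableAt one_ne_zero)
    (hc' t htI) htI j hd
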